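/- Let T be a doubly-regular tournament of order 4t+3 and let (j,i) be an arc of T (i.e., j→i). Then the number of directed walks of length 7 from i to j in T that are not paths (i.e., that repeat at least one vertex) equals 2t(t+1)(48t³+30t²−2t+1). -/

import Mathlib

/-- A tournament on the vertex type `V`. -/
structure Tournament (V : Type*) where
  r : V → V → Prop
  dec : DecidableRel r
  irrefl : ∀ i, ¬ r i i
  total : ∀ i j, i ≠ j → (r i j ↔ ¬ r j i)

attribute [instance] Tournament.dec

/-- A doubly-regular tournament of order `4t+3`: every pair of distinct vertices
jointly dominates exactly `t` vertices. -/
def Tournament.IsDoublyRegular {V : Type*} (T : Tournament V) (t : ℕ) : Prop :=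
  ∀ i j : V, i ≠ j → Nat.card {k : V // T.r i k ∧ T.r j k} = t

/-!
Since `j → i`, a walk of length 7 from `i` to `j` closes up to a closed walk of length 8 through the
arc `j → i`. Cutting off the loop at the first repeated vertex leaves a walk `o` from `i` to `j` of
length `m` together with a closed walk of length `7 - m` that meets it. A tournament has no closed
walks of length 1 or 2, so both closed walks have length at least 3; hence both are cycles, and
`m` is 2, 3 or 4.

The number of cycles meeting `o` is a sum of first-passage counts (closed walks rooted at a vertex
of `o` and avoiding the earlier ones), which inclusion–exclusion expresses through powers of the
adjacency matrix `A`. Double regularity makes every such power a combination of `1`, `A` and `Aᵀ`.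
The result is independent of `o` for `m = 2` and `m = 3`. For `m = 4` it depends on the cyclic
triangles spanned by the pentagon `o`, which are then averaged over all `o`.
-/

open Finset Matrix

section Lists

variable {V : Type*}

lemma exists_splice_of_not_nodup {l : List V} (hl : ¬ l.Nodup) :
    ∃ p x q s, l = p ++ x :: q ++ x :: s ∧ (p ++ x :: q).Nodup := by
  induction l using List.reverseRecOn with
  | nil => simp at hl
  | append_singleton l x ih =>
    by_cases h : l.Nodup
    · have hx : x ∈ l := by
        by_contra hx
        exact hl (by simpa [List.nodup_append_comm (l₁ := l)] using ⟨hx, h⟩)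
      obtain ⟨p, q, rfl⟩ := List.mem_iff_append.mp hx
      exact ⟨p, x, q, [], rfl, h⟩
    · obtain ⟨p, z, q, s, rfl, hp⟩ := ih h
      exact ⟨p, z, q, s ++ [x], by simp, hp⟩

lemma splice_injective {p q s p' q' s' : List V} {x x' : V}
    (h : p ++ x :: q ++ x :: s = p' ++ x' :: q' ++ x' :: s')
    (hn : (p ++ x :: q).Nodup) (hn' : (p' ++ x' :: q').Nodup) :
    p = p' ∧ x = x' ∧ q = q' ∧ s = s' := by
  obtain ⟨hpre, hsuf⟩ : p ++ x :: q = p' ++ x' :: q' ∧ x :: s = x' :: s' := by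
    rcases List.append_eq_append_iff.mp h with ⟨_ | ⟨z, as⟩, h1, h2⟩ | ⟨_ | ⟨z, as⟩, h1, h2⟩ <;>
      grind
  obtain ⟨rfl, rfl⟩ := List.cons.inj hsuf
  rcases List.append_eq_append_iff.mp hpre with ⟨_ | ⟨z, as⟩, h1, h2⟩ | ⟨_ | ⟨z, as⟩, h1, h2⟩ <;>
    grind

end Lists

/-! ### Walks and their first loops -/

section Walks

variable {V : Type*} [Fintype V] [DecidableEq V] (r : V → V → Prop) [DecidableRel r]

/-- The walks of length `n` from `x` to `y` along the relation `r`, each given as the list of its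
`n + 1` vertices. -/
def walks : ℕ → V → V → Finset (List V)
  | 0, x, y => if x = y then {[x]} else ∅
  | n + 1, x, y =>
    ({z | r x z} : Finset V).biUnion fun z => (walks n z y).map ⟨(x :: ·), List.cons_injective⟩

/-- The arc-indicator matrix of the relation `r`. -/
def arcMatrix : Matrix V V ℤ := Matrix.of fun x y => if r x y then 1 else 0

/-- The arc-indicator matrix of `r` with the columns indexed by the vertices of `p` erased. -/
def avoidingMatrix (p : List V) : Matrix V V ℤ :=
  arcMatrix r * diagonal fun z => if z ∈ p then 0 else 1

variable {r}

lemma mem_walks_zero {x y : V} {l : List V} : l ∈ walks r 0 x y ↔ x = y ∧ l = [x] := by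
  by_cases h : x = y <;> simp [walks, h]

lemma mem_walks_succ {n : ℕ} {x y : V} {l : List V} :
    l ∈ walks r (n + 1) x y ↔ ∃ z, r x z ∧ ∃ l' ∈ walks r n z y, x :: l' = l := by
  simp [walks]

lemma cons_mem_walks_succ {n : ℕ} {x y a : V} {l : List V} :
    a :: l ∈ walks r (n + 1) x y ↔ a = x ∧ ∃ z, r x z ∧ l ∈ walks r n z y := by
  simp only [mem_walks_succ, List.cons.injEq]
  grind

lemma length_of_mem_walks {n : ℕ} {x y : V} {l : List V} (hl : l ∈ walks r n x y) :
    l.length = n + 1 := by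
  induction n generalizing x l with
  | zero => simp [(mem_walks_zero.mp hl).2]
  | succ n ih =>
    obtain ⟨z, -, l', hl', rfl⟩ := mem_walks_succ.mp hl
    simp [ih hl']

lemma exists_cons_of_mem_walks {n : ℕ} {x y : V} {l : List V} (hl : l ∈ walks r n x y) :
    ∃ l', l = x :: l' := by
  cases n with
  | zero => exact ⟨[], (mem_walks_zero.mp hl).2⟩
  | succ n =>
    obtain ⟨z, -, l', -, rfl⟩ := mem_walks_succ.mp hl
    exact ⟨l', rfl⟩

lemma append_cons_mem_walks_iff {p s : List V} {x a b : V} :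
    p ++ x :: s ∈ walks r (p.length + s.length) a b ↔
      p ++ [x] ∈ walks r p.length a x ∧ x :: s ∈ walks r s.length x b := by
  induction p generalizing a with
  | nil =>
    suffices x :: s ∈ walks r s.length a b → a = x by
      simp only [List.nil_append, List.length_nil, zero_add, mem_walks_zero]
      grind
    intro h
    obtain ⟨l', hl'⟩ := exists_cons_of_mem_walks h
    grind
  | cons c p ih =>
    simp only [List.cons_append, List.length_cons, Nat.add_right_comm _ 1, cons_mem_walks_succ, ih]
    grind

lemma ofFn_mem_walks_iff {n : ℕ} {x y : V} {v : Fin (n + 1) → V} :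
    List.ofFn v ∈ walks r n x y ↔
      v 0 = x ∧ v (Fin.last n) = y ∧ ∀ k : Fin n, r (v k.castSucc) (v k.succ) := by
  induction n generalizing x with
  | zero =>
    simp only [mem_walks_zero, List.ofFn_succ, List.ofFn_zero, Fin.last_zero, List.cons.injEq,
      and_true, IsEmpty.forall_iff]
    grind
  | succ n ih =>
    rw [List.ofFn_succ, cons_mem_walks_succ, Fin.forall_fin_succ]
    simp only [ih, Fin.succ_last, Fin.castSucc_zero, Fin.succ_castSucc]
    grind

lemma card_walkFunctions {n : ℕ} (P : List V → Prop) [DecidablePred P] (x y : V) :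
    Nat.card {v : Fin (n + 1) → V // v 0 = x ∧ v (Fin.last n) = y ∧
      (∀ k : Fin n, r (v k.castSucc) (v k.succ)) ∧ P (List.ofFn v)} =
    #{l ∈ walks r n x y | P l} := by
  have himage : List.ofFn '' {v : Fin (n + 1) → V | v 0 = x ∧ v (Fin.last n) = y ∧
      (∀ k : Fin n, r (v k.castSucc) (v k.succ)) ∧ P (List.ofFn v)} =
      ({l ∈ walks r n x y | P l} : Finset (List V)) := by
    ext l
    simp only [Set.mem_image, Set.mem_ofPred_eq, coe_filter]
    constructor
    · rintro ⟨v, ⟨h0, hn, hr, hP⟩, rfl⟩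
      exact ⟨ofFn_mem_walks_iff.mpr ⟨h0, hn, hr⟩, hP⟩
    · rintro ⟨hl, hP⟩
      have hlen := length_of_mem_walks hl
      obtain ⟨v, rfl⟩ : ∃ v : Fin (n + 1) → V, List.ofFn v = l :=
        ⟨fun k => l[k], List.ext_getElem (by simp only [List.length_ofFn, hlen])
          fun _ _ _ => List.getElem_ofFn ..⟩
      obtain ⟨h0, hn, hr⟩ := ofFn_mem_walks_iff.mp hl
      exact ⟨v, ⟨h0, hn, hr, hP⟩, rfl⟩
  rw [← Set.ncard_coe_finset, ← himage, Set.ncard_image_of_injective _ List.ofFn_injective]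
  rfl

lemma sum_walks_succ (n : ℕ) (x y : V) (f : List V → ℤ) :
    ∑ l ∈ walks r (n + 1) x y, f l =
      ∑ z, arcMatrix r x z * ∑ l ∈ walks r n z y, f (x :: l) := by
  rw [walks, sum_biUnion]
  · simp [sum_filter, arcMatrix]
  · intro z _ z' _ hz
    simp only [Function.onFun, disjoint_left, mem_map, Function.Embedding.coeFn_mk]
    rintro _ ⟨l, hl, rfl⟩ ⟨l', hl', h⟩
    obtain ⟨q, rfl⟩ := exists_cons_of_mem_walks hl
    obtain ⟨q', rfl⟩ := exists_cons_of_mem_walks hl'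
    grind

lemma sum_walks_one (x y : V) (f : List V → ℤ) :
    ∑ l ∈ walks r 1 x y, f l = arcMatrix r x y * f [x, y] := by
  rw [sum_walks_succ, sum_eq_single y] <;> simp +contextual [walks]

lemma card_walks_avoiding (p : List V) (n : ℕ) (x y : V) :
    (#{l ∈ walks r n x y | ∀ z ∈ l.tail, z ∉ p} : ℤ) = (avoidingMatrix r p ^ n) x y := by
  induction n generalizing x with
  | zero => by_cases h : x = y <;> simp [walks, h, filter_singleton]
  | succ n ih =>
    rw [natCast_card_filter, sum_walks_succ, pow_succ', mul_apply]
    refine sum_congr rfl fun z _ => ?_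
    have htail : ∀ l ∈ walks r n z y,
        ((∀ w ∈ (x :: l).tail, w ∉ p) ↔ z ∉ p ∧ ∀ w ∈ l.tail, w ∉ p) := by
      intro l hl
      obtain ⟨q, rfl⟩ := exists_cons_of_mem_walks hl
      simp
    rw [← ih, ← natCast_card_filter, filter_congr htail, avoidingMatrix, mul_diagonal]
    by_cases hz : z ∈ p <;> simp [hz]

lemma card_walks (n : ℕ) (x y : V) : (#(walks r n x y) : ℤ) = (arcMatrix r ^ n) x y := by
  simpa [avoidingMatrix] using card_walks_avoiding (r := r) [] n x y

lemma exists_eq_append_of_mem_walks_succ {n : ℕ} {x y : V} {l : List V}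
    (hl : l ∈ walks r (n + 1) x y) : ∃ q, l = x :: q ++ [y] := by
  induction n generalizing x l with
  | zero =>
    obtain ⟨z, -, l', hl', rfl⟩ := mem_walks_succ.mp hl
    obtain ⟨rfl, rfl⟩ := mem_walks_zero.mp hl'
    exact ⟨[], rfl⟩
  | succ n ih =>
    obtain ⟨z, -, l', hl', rfl⟩ := mem_walks_succ.mp hl
    obtain ⟨q, rfl⟩ := ih hl'
    exact ⟨z :: q, rfl⟩

lemma splice_mem_walks_iff {p q s : List V} {x a b : V} :
    p ++ x :: q ++ x :: s ∈ walks r (p.length + s.length + (q.length + 1)) a b ↔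
      p ++ x :: s ∈ walks r (p.length + s.length) a b ∧
        x :: q ++ [x] ∈ walks r (q.length + 1) x x := by
  have hloop := append_cons_mem_walks_iff (r := r) (p := x :: q) (x := x) (s := s) (a := x) (b := b)
  have hall :=
    append_cons_mem_walks_iff (r := r) (p := p) (x := x) (s := q ++ x :: s) (a := a) (b := b)
  have hlen : p.length + s.length + (q.length + 1) = p.length + (q ++ x :: s).length := by
    grind
  have hlen' : (q ++ x :: s).length = (x :: q).length + s.length := by
    grind
  rw [hlen, List.append_assoc, List.cons_append, hall, append_cons_mem_walks_iff, hlen',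
    ← List.cons_append, hloop, List.length_cons]
  tauto

lemma loop_at_walk_iff_splice {n m k : ℕ} {x y : V} {o c : List V} :
    (m < n ∧ o ∈ walks r m x y ∧ k < m + 1 ∧ c ∈ walks r (n - m) (o.getD k x) (o.getD k x) ∧
      (o.take k ++ c.tail).Nodup) ↔
    ∃ p z q s, m = p.length + s.length ∧ o = p ++ z :: s ∧ k = p.length ∧ c = z :: q ++ [z] ∧
      p ++ z :: q ++ z :: s ∈ walks r n x y ∧ (p ++ z :: q).Nodup := by
  have hnodup : ∀ {p q : List V} {z : V}, (p ++ (q ++ [z])).Nodup ↔ (p ++ z :: q).Nodup :=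
    fun {p q z} => ((List.perm_append_singleton z q).append_left p).nodup_iff
  constructor
  · rintro ⟨hm, ho, hk, hc, hn⟩
    have hlen := length_of_mem_walks ho
    obtain ⟨p, z, s, rfl, rfl⟩ : ∃ p z s, o = p ++ z :: s ∧ k = p.length :=
      ⟨o.take k, o[k], o.drop (k + 1), by simp, by simp; omega⟩
    obtain ⟨d, rfl⟩ : ∃ d, n = m + (d + 1) := ⟨n - m - 1, by omega⟩
    simp only [Nat.add_sub_cancel_left, List.getD_append_right, le_refl, Nat.sub_self,
      List.getD_cons_zero] at hc
    obtain ⟨q, rfl⟩ := exists_eq_append_of_mem_walks_succ hc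
    obtain rfl : d = q.length := by simpa [eq_comm] using length_of_mem_walks hc
    obtain rfl : m = p.length + s.length := by
      simp only [List.length_append, List.length_cons] at hlen
      omega
    refine ⟨p, z, q, s, rfl, rfl, rfl, rfl, splice_mem_walks_iff.mpr ⟨ho, hc⟩, ?_⟩
    simpa [hnodup] using hn
  · rintro ⟨p, z, q, s, rfl, rfl, rfl, rfl, hl, hn⟩
    obtain rfl : n = p.length + s.length + (q.length + 1) := by
      have := length_of_mem_walks hl
      simp only [List.length_append, List.length_cons] at this
      omega
    obtain ⟨ho, hc⟩ := splice_mem_walks_iff.mp hl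
    refine ⟨by omega, ho, by omega, by simpa using hc, by simpa [hnodup] using hn⟩

-- The loop closed by the first repeated vertex is cut off; `(o.take k ++ c.tail).Nodup` says that
-- no vertex repeats before it closes, which makes the cut unique.
lemma card_walks_not_nodup (n : ℕ) (x y : V) :
    #{l ∈ walks r n x y | ¬ l.Nodup} =
      ∑ m ∈ range n, ∑ o ∈ walks r m x y, ∑ k ∈ range (m + 1),
        #{c ∈ walks r (n - m) (o.getD k x) (o.getD k x) | (o.take k ++ c.tail).Nodup} := by
  simp only [← card_sigma]
  refine (card_bij (fun a _ => a.2.1.take a.2.2.1 ++ a.2.2.2 ++ a.2.1.drop (a.2.2.1 + 1))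
    ?_ ?_ ?_).symm
  · intro ⟨m, o, k, c⟩ h
    simp only [mem_sigma, mem_range, mem_filter, loop_at_walk_iff_splice] at h
    obtain ⟨p, z, q, s, rfl, rfl, rfl, rfl, hl, -⟩ := h
    have hdup : ¬ (p ++ z :: q ++ z :: s).Nodup := by simp [List.nodup_append]
    simpa using And.intro hl hdup
  · intro ⟨m, o, k, c⟩ h ⟨m', o', k', c'⟩ h' heq
    simp only [mem_sigma, mem_range, mem_filter, loop_at_walk_iff_splice] at h h'
    obtain ⟨p, z, q, s, rfl, rfl, rfl, rfl, -, hn⟩ := h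
    obtain ⟨p', z', q', s', rfl, rfl, rfl, rfl, -, hn'⟩ := h'
    obtain ⟨rfl, rfl, rfl, rfl⟩ := splice_injective (by simpa using heq) hn hn'
    rfl
  · intro l hl
    rw [mem_filter] at hl
    obtain ⟨p, z, q, s, rfl, hn⟩ := exists_splice_of_not_nodup hl.2
    refine ⟨⟨p.length + s.length, p ++ z :: s, p.length, z :: q ++ [z]⟩, ?_, by simp⟩
    simp only [mem_sigma, mem_range, mem_filter, loop_at_walk_iff_splice]
    exact ⟨p, z, q, s, rfl, rfl, rfl, rfl, hl.1, hn⟩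

/-! ### First passages -/

variable (r) in
/-- The first-passage matrix: its `(x, y)` entry counts the walks of length `n + 1` from `x` to `y`
whose inner vertices avoid `p`. -/
def firstPassage (p : List V) (n : ℕ) : Matrix V V ℤ := avoidingMatrix r p ^ n * arcMatrix r

lemma avoidingMatrix_pow_succ_apply {p : List V} {n : ℕ} {x y : V} (hy : y ∉ p) :
    (avoidingMatrix r p ^ (n + 1)) x y = firstPassage r p n x y := by
  rw [pow_succ, firstPassage, avoidingMatrix, ← mul_assoc, mul_diagonal, if_neg hy, mul_one]

-- A walk either avoids `p` or splits at its first inner vertex in `p`.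
lemma firstPassage_add_sum (p : List V) (n : ℕ) :
    firstPassage r p n + ∑ k ∈ range n, firstPassage r p k *
      diagonal (fun z => if z ∈ p then (1 : ℤ) else 0) * arcMatrix r ^ (n - k) =
    arcMatrix r ^ (n + 1) := by
  induction n with
  | zero => simp [firstPassage]
  | succ n ih =>
    have hdiag : (diagonal fun z => if z ∈ p then (0 : ℤ) else 1) =
        1 - diagonal fun z => if z ∈ p then (1 : ℤ) else 0 := by
      rw [← diagonal_one, diagonal_sub]
      congr! 2
      split_ifs <;> rfl
    have hsucc : firstPassage r p (n + 1) = firstPassage r p n * arcMatrix r -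
        firstPassage r p n * diagonal (fun z => if z ∈ p then 1 else 0) * arcMatrix r := by
      rw [firstPassage, pow_succ]
      nth_rw 2 [avoidingMatrix]
      rw [hdiag, ← mul_assoc, ← firstPassage, mul_sub, sub_mul, mul_one]
    have hsum : ∀ k ∈ range n, firstPassage r p k *
        diagonal (fun z => if z ∈ p then 1 else 0) * arcMatrix r ^ (n + 1 - k) =
        firstPassage r p k * diagonal (fun z => if z ∈ p then 1 else 0) * arcMatrix r ^ (n - k) *
          arcMatrix r := by
      intro k hk
      rw [Nat.sub_add_comm (mem_range.mp hk).le, pow_succ, mul_assoc _ _ (arcMatrix r)]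
    rw [sum_range_succ, sum_congr rfl hsum, ← sum_mul, hsucc, pow_succ _ (n + 1), ← ih, add_mul,
      Nat.add_sub_cancel_left, pow_one]
    abel

lemma firstPassage_zero (p : List V) : firstPassage r p 0 = arcMatrix r := by
  rw [firstPassage, pow_zero, one_mul]

lemma firstPassage_succ_apply {p : List V} (hp : p.Nodup) (n : ℕ) (x y : V) :
    firstPassage r p (n + 1) x y = (arcMatrix r ^ (n + 2)) x y - ∑ k ∈ range (n + 1),
      (p.map fun s => firstPassage r p k x s * (arcMatrix r ^ (n + 1 - k)) s y).sum := by
  rw [← firstPassage_add_sum p (n + 1), Matrix.add_apply, Matrix.sum_apply, eq_sub_iff_add_eq]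
  congr! 2 with k
  rw [mul_apply, ← List.sum_toFinset _ hp]
  simp only [mul_diagonal, mul_ite, mul_one, mul_zero, ite_mul, zero_mul, ← List.mem_toFinset,
    sum_ite_mem, univ_inter]

lemma firstPassage_nil (n : ℕ) : firstPassage r [] n = arcMatrix r ^ (n + 1) := by
  simp [firstPassage, avoidingMatrix, pow_succ]

variable (r) in
/-- The number of closed walks of length `n + 1` that meet the path `o`, each of them rooted at the
first vertex of `o` through which it passes. -/
def loopsMeeting (n : ℕ) (o : List V) : ℤ :=
  ∑ k : Fin o.length, firstPassage r (o.take k) n o[k] o[k]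

end Walks

/-! ### The adjacency matrix of a doubly-regular tournament -/

namespace Tournament

variable {V : Type*} (T : Tournament V)

lemma asymm {x y : V} (h : T.r x y) : ¬ T.r y x := by
  by_cases hxy : x = y
  · exact hxy ▸ T.irrefl x
  · exact (T.total x y hxy).mp h

/-- The adjacency matrix of a tournament. -/
abbrev adj : Matrix V V ℤ := arcMatrix T.r

variable {T}

lemma adj_of_arc {x y : V} (h : T.r x y) : T.adj x y = 1 := if_pos h

lemma adj_of_arc_symm {x y : V} (h : T.r x y) : T.adj y x = 0 := if_neg (T.asymm h)

lemma adj_of_not_arc {x y : V} (h : ¬ T.r x y) : T.adj x y = 0 := if_neg h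

lemma adj_self (x : V) : T.adj x x = 0 := if_neg (T.irrefl x)

variable (T) in
lemma one_add_adj_add_transpose [DecidableEq V] : 1 + T.adj + T.adjᵀ = of fun _ _ => 1 := by
  ext x y
  by_cases hxy : x = y
  · subst hxy
    simp [adj_self]
  · by_cases h : T.r x y
    · simp [hxy, adj_of_arc h, adj_of_arc_symm h]
    · have h' : T.r y x := (T.total y x (Ne.symm hxy)).mpr h
      simp [hxy, adj_of_arc h', adj_of_arc_symm h']

lemma ne_of_arc {x y : V} (h : T.r x y) : x ≠ y := fun hxy => T.irrefl y (hxy ▸ h)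

lemma ne_of_arc_of_arc {x y z : V} (hxy : T.r x y) (hyz : T.r y z) : x ≠ z :=
  fun hxz => T.asymm hxy (hxz ▸ hyz)

variable (T) in
lemma arc_or_arc {x y : V} (h : x ≠ y) : T.r x y ∨ T.r y x :=
  or_iff_not_imp_right.mpr (T.total x y h).mpr

variable (T) in
lemma one_apply_of_arc [DecidableEq V] {x y : V} (h : T.r x y) : (1 : Matrix V V ℤ) x y = 0 :=
  one_apply_ne (ne_of_arc h)

variable (T) in
lemma one_apply_of_arc_symm [DecidableEq V] {x y : V} (h : T.r y x) :
    (1 : Matrix V V ℤ) x y = 0 :=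
  one_apply_ne (ne_of_arc h).symm

section Finite

variable [Fintype V]

lemma adj_mul_transpose_apply_self (x : V) : (T.adj * T.adjᵀ) x x = ∑ y, T.adj x y := by
  rw [mul_apply]
  refine sum_congr rfl fun y _ => ?_
  by_cases h : T.r x y <;> simp [arcMatrix, h]

lemma sum_sum_adj : 2 * ∑ x, ∑ y, T.adj x y = Fintype.card V * (Fintype.card V - 1 : ℤ) := by
  classical
  have hcomp : ∀ x y, T.adj x y + T.adj y x = 1 - (1 : Matrix V V ℤ) x y := fun x y => by
    have h := congrFun₂ T.one_add_adj_add_transpose x y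
    simp only [Matrix.add_apply, transpose_apply, of_apply] at h
    linarith
  calc 2 * ∑ x, ∑ y, T.adj x y = ∑ x, ∑ y, (T.adj x y + T.adj y x) := by
        simp only [sum_add_distrib]
        rw [sum_comm (f := fun x y => T.adj y x)]
        ring
    _ = Fintype.card V * (Fintype.card V - 1 : ℤ) := by
        simp [hcomp, Matrix.one_apply, mul_sub]

namespace IsDoublyRegular

variable {t : ℕ} (hT : T.IsDoublyRegular t)

include hT

lemma adj_mul_transpose_apply_ne {x y : V} (hxy : x ≠ y) : (T.adj * T.adjᵀ) x y = t := by
  rw [← hT x y hxy, Nat.card_eq_fintype_card, Fintype.card_subtype, mul_apply, card_filter]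
  push_cast
  refine sum_congr rfl fun z _ => ?_
  by_cases h : T.r x z <;> simp [arcMatrix, h]

lemma outdegree_mul_self (x : V) :
    (∑ y, T.adj x y) * ∑ y, T.adj x y = (∑ y, T.adj x y) * (2 * t + 1) := by
  classical
  have hleft : (T.adj * (T.adj * T.adjᵀ)) x x = (∑ y, T.adj x y) * t := by
    rw [mul_apply, sum_mul]
    refine sum_congr rfl fun y _ => ?_
    by_cases hxy : x = y
    · simp [← hxy, adj_self]
    · rw [hT.adj_mul_transpose_apply_ne (Ne.symm hxy)]
  have hright : (T.adj * T.adjᵀ * T.adjᵀ) x x = (∑ y, T.adj x y) * t := by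
    rw [← hleft, ← transpose_apply (T.adj * (T.adj * T.adjᵀ)), transpose_mul, transpose_mul,
      transpose_transpose]
  calc (∑ y, T.adj x y) * ∑ y, T.adj x y
      = (T.adj * (of fun _ _ => 1) * T.adjᵀ : Matrix V V ℤ) x x := by
        simp [mul_apply, mul_sum]
    _ = (T.adj * T.adjᵀ + T.adj * (T.adj * T.adjᵀ) + T.adj * T.adjᵀ * T.adjᵀ) x x := by
        rw [← T.one_add_adj_add_transpose]
        noncomm_ring
    _ = (∑ y, T.adj x y) * (2 * t + 1) := by
        rw [Matrix.add_apply, Matrix.add_apply, hleft, hright, adj_mul_transpose_apply_self]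
        ring

lemma outdegree_eq (hV : Fintype.card V = 4 * t + 3) (x : V) : ∑ y, T.adj x y = 2 * t + 1 := by
  have hle : ∀ x ∈ univ, ∑ y, T.adj x y ≤ 2 * t + 1 := by
    intro x _
    by_cases h0 : ∑ y, T.adj x y = 0
    · rw [h0]; positivity
    · exact (mul_left_cancel₀ h0 (hT.outdegree_mul_self x)).le
  refine (sum_eq_sum_iff_of_le hle).mp ?_ x (mem_univ x)
  have hsum := T.sum_sum_adj
  simp only [sum_const, card_univ, hV, nsmul_eq_mul] at hsum ⊢
  push_cast at hsum ⊢
  linarith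

variable [DecidableEq V] (hV : Fintype.card V = 4 * t + 3)

include hV

lemma adj_mul_transpose :
    T.adj * T.adjᵀ = (2 * t + 1 : ℤ) • 1 + (t : ℤ) • T.adj + (t : ℤ) • T.adjᵀ := by
  ext x y
  have hone := congrFun₂ T.one_add_adj_add_transpose x y
  simp only [Matrix.add_apply, transpose_apply, of_apply, Matrix.smul_apply, smul_eq_mul]
    at hone ⊢
  by_cases hxy : x = y
  · subst hxy
    simp [adj_mul_transpose_apply_self, hT.outdegree_eq hV, adj_self]
  · rw [hT.adj_mul_transpose_apply_ne hxy]
    rw [one_apply_ne hxy] at hone ⊢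
    linear_combination (-t : ℤ) * hone

lemma adj_mul_sum :
    T.adj * (1 + T.adj + T.adjᵀ) = (2 * t + 1 : ℤ) • (1 + T.adj + T.adjᵀ) := by
  rw [T.one_add_adj_add_transpose]
  ext x y
  simp [mul_apply, hT.outdegree_eq hV]

lemma sum_mul_adj :
    (1 + T.adj + T.adjᵀ) * T.adj = (2 * t + 1 : ℤ) • (1 + T.adj + T.adjᵀ) := by
  have hsq : (1 + T.adj + T.adjᵀ) * (1 + T.adj + T.adjᵀ) =
      (4 * t + 3 : ℤ) • (1 + T.adj + T.adjᵀ) := by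
    rw [T.one_add_adj_add_transpose]
    ext x y
    simp [mul_apply, hV]
  have htranspose : T.adjᵀ * (1 + T.adj + T.adjᵀ) = (2 * t + 1 : ℤ) • (1 + T.adj + T.adjᵀ) := by
    rw [add_mul, add_mul, one_mul, hT.adj_mul_sum hV] at hsq
    linear_combination (norm := module) hsq
  have h := congrArg transpose htranspose
  simp only [transpose_mul, transpose_smul, transpose_add, transpose_one, transpose_transpose] at h
  rwa [add_right_comm] at h

lemma adj_sq : T.adj ^ 2 = (t : ℤ) • T.adj + (t + 1 : ℤ) • T.adjᵀ := by
  have h := hT.adj_mul_sum hV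
  rw [mul_add, mul_add, hT.adj_mul_transpose hV, mul_one, ← pow_two] at h
  linear_combination (norm := module) h

lemma transpose_mul_adj :
    T.adjᵀ * T.adj = (2 * t + 1 : ℤ) • 1 + (t : ℤ) • T.adj + (t : ℤ) • T.adjᵀ := by
  have h := hT.sum_mul_adj hV
  rw [add_mul, add_mul, one_mul, ← pow_two, hT.adj_sq hV] at h
  linear_combination (norm := module) h

lemma adj_pow_three :
    T.adj ^ 3 = ((t + 1) * (2 * t + 1) : ℤ) • 1 + (t * (2 * t + 1) : ℤ) • T.adj +
      (2 * t * (t + 1) : ℤ) • T.adjᵀ := by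
  rw [pow_succ, hT.adj_sq hV, add_mul, smul_mul_assoc, smul_mul_assoc, ← pow_two, hT.adj_sq hV,
    hT.transpose_mul_adj hV]
  module

lemma adj_pow_four :
    T.adj ^ 4 = (2 * t * (t + 1) * (2 * t + 1) : ℤ) • 1 +
      (4 * t ^ 3 + 5 * t ^ 2 + 3 * t + 1 : ℤ) • T.adj +
      (t * (t + 1) * (4 * t + 1) : ℤ) • T.adjᵀ := by
  rw [pow_succ, hT.adj_pow_three hV, add_mul, add_mul, smul_mul_assoc, smul_mul_assoc,
    smul_mul_assoc, one_mul, ← pow_two, hT.adj_sq hV, hT.transpose_mul_adj hV]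
  module

lemma adj_pow_five_apply_self (x : V) :
    (T.adj ^ 5) x x = t * (t + 1) * (4 * t + 1) * (2 * t + 1) := by
  rw [pow_succ, hT.adj_pow_four hV, add_mul, add_mul, smul_mul_assoc, smul_mul_assoc,
    smul_mul_assoc, one_mul, ← pow_two, hT.adj_sq hV, hT.transpose_mul_adj hV]
  simp only [Matrix.add_apply, Matrix.smul_apply, transpose_apply, one_apply_eq, adj_self,
    smul_eq_mul]
  ring

lemma adj_sq_apply (x y : V) : (T.adj ^ 2) x y = t * T.adj x y + (t + 1) * T.adj y x := by
  rw [hT.adj_sq hV]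
  rfl

/-! ### Cycles meeting a given cycle -/

lemma card_cyclic_triangles_through {x y : V} (hxy : x ≠ y) :
    T.adj x y * (T.adj ^ 2) y x + (T.adj ^ 2) x y * T.adj y x = t + 1 := by
  rcases T.arc_or_arc hxy with h | h <;>
    simp [hT.adj_sq_apply hV, adj_of_arc h, adj_of_arc_symm h]

lemma firstPassage_two_apply_self {p : List V} {x : V} (hp : (x :: p).Nodup) :
    firstPassage T.r p 2 x x = (t + 1) * (2 * t + 1) - p.length * (t + 1) +
      (p.map fun y => (p.map fun z => T.adj x y * T.adj y z * T.adj z x).sum).sum := by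
  obtain ⟨hx, hp⟩ := List.nodup_cons.mp hp
  have hcube : (T.adj ^ 3) x x = (t + 1) * (2 * t + 1) := by
    rw [hT.adj_pow_three hV]
    simp only [Matrix.add_apply, Matrix.smul_apply, transpose_apply, one_apply_eq, adj_self,
      smul_eq_mul]
    ring
  have hthrough : ∑ y ∈ p.toFinset, (T.adj x y * (T.adj ^ 2) y x + (T.adj ^ 2) x y * T.adj y x) =
      p.length * (t + 1) := by
    have hne : ∀ y ∈ p.toFinset, x ≠ y := fun y hy h => hx (h ▸ List.mem_toFinset.mp hy)
    rw [sum_congr rfl fun y hy => hT.card_cyclic_triangles_through hV (hne y hy), sum_const,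
      List.toFinset_card_of_nodup hp, nsmul_eq_mul]
  simp only [firstPassage_succ_apply hp, firstPassage_zero, sum_range_succ, range_zero, sum_empty,
    hcube, Nat.reduceAdd, Nat.reduceSub, pow_one, zero_add, ← List.sum_toFinset _ hp, sub_mul,
    sum_sub_distrib, ← hthrough, sum_add_distrib]
  rw [sum_comm (s := p.toFinset)]
  simp only [sum_mul]
  ring

lemma loopsMeeting_triangle {i a j : V} (hia : T.r i a) (haj : T.r a j) (hji : T.r j i) :
    loopsMeeting T.r 4 [i, a, j] = 6 * t ^ 3 * (4 * t + 3) := by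
  have hi : [i].Nodup := List.nodup_singleton i
  have hai : [i, a].Nodup := by simp [ne_of_arc hia]
  have hexpand : loopsMeeting T.r 4 [i, a, j] =
      firstPassage T.r [] 4 i i + firstPassage T.r [i] 4 a a + firstPassage T.r [i, a] 4 j j := by
    simp [loopsMeeting, Fin.sum_univ_succ, add_assoc]
  simp only [hexpand, firstPassage_nil, firstPassage_zero, firstPassage_succ_apply hi,
    firstPassage_succ_apply hai, sum_range_succ, range_zero, sum_empty, List.map_cons,
    List.map_nil, List.sum_cons, List.sum_nil, Nat.reduceAdd, Nat.reduceSub]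
  simp only [hT.adj_pow_five_apply_self hV, hT.adj_pow_four hV, hT.adj_pow_three hV, hT.adj_sq hV,
    pow_one, Matrix.add_apply, Matrix.smul_apply, transpose_apply, smul_eq_mul, one_apply_eq,
    T.one_apply_of_arc, T.one_apply_of_arc_symm, adj_of_arc, adj_of_arc_symm, adj_self, hia, haj,
    hji]
  ring

lemma loopsMeeting_quadrilateral {i a b j : V} (hia : T.r i a) (hab : T.r a b)
    (hbj : T.r b j) (hji : T.r j i) :
    loopsMeeting T.r 3 [i, a, b, j] = 16 * t ^ 3 + 6 * t ^ 2 - 2 * t + 1 := by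
  have hib := ne_of_arc_of_arc hia hab
  have haj := ne_of_arc_of_arc hab hbj
  have hi : [i].Nodup := List.nodup_singleton i
  have hai : [i, a].Nodup := by simp [ne_of_arc hia]
  have hiab : [i, a, b].Nodup := by simp [ne_of_arc hia, ne_of_arc hab, hib]
  have hexpand : loopsMeeting T.r 3 [i, a, b, j] =
      firstPassage T.r [] 3 i i + firstPassage T.r [i] 3 a a + firstPassage T.r [i, a] 3 b b +
        firstPassage T.r [i, a, b] 3 j j := by
    simp [loopsMeeting, Fin.sum_univ_succ, add_assoc]
  simp only [hexpand, firstPassage_nil, firstPassage_zero, firstPassage_succ_apply hi,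
    firstPassage_succ_apply hai, firstPassage_succ_apply hiab, sum_range_succ, range_zero,
    sum_empty, List.map_cons, List.map_nil, List.sum_cons, List.sum_nil, Nat.reduceAdd,
    Nat.reduceSub]
  rcases T.arc_or_arc hib with hib | hib <;> rcases T.arc_or_arc haj with haj | haj <;>
  · simp only [hT.adj_pow_four hV, hT.adj_pow_three hV, hT.adj_sq hV, pow_one, Matrix.add_apply,
      Matrix.smul_apply, transpose_apply, smul_eq_mul, one_apply_eq, T.one_apply_of_arc,
      T.one_apply_of_arc_symm, adj_of_arc, adj_of_arc_symm, adj_self, hia, hab, hbj, hji, hib, haj]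
    ring

-- By inclusion–exclusion the correction is the number of cyclic triangles inside the pentagon: the
-- chord terms run over its ten triples of vertices.
lemma loopsMeeting_pentagon {i a b c j : V} (hia : T.r i a) (hab : T.r a b)
    (hbc : T.r b c) (hcj : T.r c j) (hji : T.r j i) :
    loopsMeeting T.r 2 [i, a, b, c, j] = 5 * (t + 1) * (2 * t - 1) +
      (T.adj a j + T.adj j a * (T.adj b j + T.adj a c)) +
      (T.adj i c + T.adj c i * (T.adj a c + T.adj i b)) +
      (T.adj b i + T.adj j b + T.adj i b * T.adj b j) + T.adj c a := by
  have hnodup : [j, i, a, b, c].Nodup := by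
    simp [ne_of_arc hji, ne_of_arc hia, ne_of_arc hab, ne_of_arc hbc, ne_of_arc_of_arc hji hia,
      ne_of_arc_of_arc hia hab, ne_of_arc_of_arc hab hbc, (ne_of_arc hcj).symm,
      (ne_of_arc_of_arc hbc hcj).symm, (ne_of_arc_of_arc hcj hji).symm]
  have hexpand : loopsMeeting T.r 2 [i, a, b, c, j] = firstPassage T.r [] 2 i i +
      firstPassage T.r [i] 2 a a + firstPassage T.r [i, a] 2 b b +
      firstPassage T.r [i, a, b] 2 c c + firstPassage T.r [i, a, b, c] 2 j j := by
    simp [loopsMeeting, Fin.sum_univ_succ, add_assoc]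
  rw [hexpand, hT.firstPassage_two_apply_self hV (by grind),
    hT.firstPassage_two_apply_self hV (by grind), hT.firstPassage_two_apply_self hV (by grind),
    hT.firstPassage_two_apply_self hV (by grind), hT.firstPassage_two_apply_self hV hnodup]
  simp only [List.map_cons, List.map_nil, List.sum_cons, List.sum_nil, List.length_cons,
    List.length_nil, adj_of_arc, adj_of_arc_symm, adj_self, hia, hab, hbc, hcj, hji]
  push_cast
  ring

lemma adj_mul_adj_sq_apply (x y : V) :
    T.adj x y * (T.adj ^ 2) x y = t * T.adj x y := by
  rw [hT.adj_sq_apply hV]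
  by_cases h : T.r x y
  · rw [adj_of_arc h, adj_of_arc_symm h]
    ring
  · rw [adj_of_not_arc h, zero_mul, mul_zero]

lemma adj_swap_mul_adj_sq_apply (x y : V) :
    T.adj y x * (T.adj ^ 2) x y = (t + 1) * T.adj y x := by
  rw [hT.adj_sq_apply hV]
  by_cases h : T.r y x
  · rw [adj_of_arc h, adj_of_arc_symm h]
    ring
  · rw [adj_of_not_arc h, zero_mul, mul_zero]

lemma adj_mul_adj_pow_three_apply (x y : V) :
    T.adj x y * (T.adj ^ 3) x y = t * (2 * t + 1) * T.adj x y := by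
  by_cases h : T.r x y
  · simp only [hT.adj_pow_three hV, Matrix.add_apply, Matrix.smul_apply, transpose_apply,
      T.one_apply_of_arc h, adj_of_arc h, adj_of_arc_symm h, smul_eq_mul]
    ring
  · rw [adj_of_not_arc h, zero_mul, mul_zero]

omit [DecidableEq V] in
lemma commute_adj_transpose : Commute T.adj T.adjᵀ := by
  classical
  exact (hT.adj_mul_transpose hV).trans (hT.transpose_mul_adj hV).symm

lemma adj_sq_mul_transpose_apply {i j : V} (hji : T.r j i) :
    (T.adj ^ 2 * T.adjᵀ) i j = t * (2 * t + 1) := by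
  rw [pow_two, mul_assoc, hT.adj_mul_transpose hV, mul_add, mul_add, mul_smul_comm, mul_smul_comm,
    mul_smul_comm, mul_one, ← pow_two]
  simp only [Matrix.add_apply, Matrix.smul_apply, hT.adj_sq_apply hV,
    hT.adj_mul_transpose_apply_ne (ne_of_arc hji).symm, adj_of_arc hji, adj_of_arc_symm hji,
    smul_eq_mul]
  ring

omit [DecidableEq V] in
lemma sum_three_walks_mul_end_chords (x y : V) :
    ∑ b, ∑ c, T.adj x b * T.adj b c * T.adj c y *
      (T.adj x y + T.adj y x * (T.adj b y + T.adj x c)) =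
    t * (2 * t + 1) * T.adj x y + 2 * t * (t + 1) * T.adj y x := by
  classical
  calc _ = T.adj x y * (T.adj ^ 3) x y +
        T.adj y x * (∑ b, T.adj x b * (T.adj b y * (T.adj ^ 2) b y) +
          ∑ c, T.adj x c * (T.adj ^ 2) x c * T.adj c y) := by
        simp only [pow_succ' _ 2, pow_two, mul_apply, mul_sum, sum_mul, mul_add]
        rw [sum_comm (f := fun c b =>
          T.adj y x * (T.adj x c * (T.adj x b * T.adj b c) * T.adj c y))]
        simp only [← sum_add_distrib]
        exact sum_congr rfl fun b _ => sum_congr rfl fun c _ => by ring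
    _ = t * (2 * t + 1) * T.adj x y + 2 * t * (T.adj y x * (T.adj ^ 2) x y) := by
        rw [hT.adj_mul_adj_pow_three_apply hV]
        simp only [hT.adj_mul_adj_sq_apply hV]
        simp only [pow_two, mul_apply, mul_left_comm _ (t : ℤ), mul_assoc, ← mul_sum]
        ring
    _ = _ := by
        rw [hT.adj_swap_mul_adj_sq_apply hV]
        ring

omit [DecidableEq V] in
lemma sum_four_walks_mul_last_chords {i j : V} (hji : T.r j i) :
    ∑ a, ∑ b, ∑ c, T.adj i a * T.adj a b * T.adj b c * T.adj c j *
      (T.adj a j + T.adj j a * (T.adj b j + T.adj a c)) = t * (t + 1) * (4 * t + 1) := by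
  classical
  calc _ = ∑ a, T.adj i a * ∑ b, ∑ c, T.adj a b * T.adj b c * T.adj c j *
        (T.adj a j + T.adj j a * (T.adj b j + T.adj a c)) := by
        simp only [mul_sum, mul_assoc]
    _ = t * (2 * t + 1) * (T.adj ^ 2) i j + 2 * t * (t + 1) * (T.adj * T.adjᵀ) i j := by
        simp only [hT.sum_three_walks_mul_end_chords hV, pow_two, mul_apply, mul_sum,
          ← sum_add_distrib]
        exact sum_congr rfl fun a _ => by rw [transpose_apply]; ring
    _ = _ := by
        rw [hT.adj_sq_apply hV, hT.adj_mul_transpose_apply_ne (ne_of_arc hji).symm, adj_of_arc hji,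
          adj_of_arc_symm hji]
        ring

omit [DecidableEq V] in
lemma sum_four_walks_mul_first_chords {i j : V} (hji : T.r j i) :
    ∑ a, ∑ b, ∑ c, T.adj i a * T.adj a b * T.adj b c * T.adj c j *
      (T.adj i c + T.adj c i * (T.adj a c + T.adj i b)) = t * (t + 1) * (4 * t + 1) := by
  classical
  calc _ = ∑ c, (∑ a, ∑ b, T.adj i a * T.adj a b * T.adj b c *
        (T.adj i c + T.adj c i * (T.adj a c + T.adj i b))) * T.adj c j := by
        rw [sum_comm_cycle]
        simp only [sum_mul, mul_right_comm _ (T.adj _ j)]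
    _ = t * (2 * t + 1) * (T.adj ^ 2) i j + 2 * t * (t + 1) * (T.adj * T.adjᵀ) i j := by
        rw [hT.commute_adj_transpose hV]
        simp only [hT.sum_three_walks_mul_end_chords hV, pow_two, mul_apply, mul_sum,
          ← sum_add_distrib]
        exact sum_congr rfl fun c _ => by rw [transpose_apply]; ring
    _ = _ := by
        rw [hT.adj_sq_apply hV, hT.adj_mul_transpose_apply_ne (ne_of_arc hji).symm, adj_of_arc hji,
          adj_of_arc_symm hji]
        ring

omit [DecidableEq V] in
lemma sum_four_walks_mul_middle_chords {i j : V} (hji : T.r j i) :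
    ∑ a, ∑ b, ∑ c, T.adj i a * T.adj a b * T.adj b c * T.adj c j *
      (T.adj b i + T.adj j b + T.adj i b * T.adj b j) = t * (t + 1) * (5 * t + 2) := by
  classical
  calc _ = ∑ b, (T.adj b i * (T.adj ^ 2) i b * (T.adj ^ 2) b j +
        (T.adj ^ 2) i b * (T.adj j b * (T.adj ^ 2) b j) +
        T.adj i b * (T.adj ^ 2) i b * (T.adj b j * (T.adj ^ 2) b j)) := by
        rw [sum_comm]
        simp only [pow_two, mul_apply, mul_sum, sum_mul, ← sum_add_distrib]
        exact sum_congr rfl fun b _ => (sum_comm.trans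
          (sum_congr rfl fun c _ => sum_congr rfl fun a _ => by ring))
    _ = (t + 1) * (T.adjᵀ * T.adj ^ 2) i j + (t + 1) * (T.adj ^ 2 * T.adjᵀ) i j +
        t ^ 2 * (T.adj ^ 2) i j := by
        simp only [hT.adj_mul_adj_sq_apply hV, hT.adj_swap_mul_adj_sq_apply hV]
        rw [pow_two (t : ℤ), pow_two T.adj, mul_apply (M := T.adj), ← pow_two]
        simp only [mul_apply, mul_sum, ← sum_add_distrib]
        exact sum_congr rfl fun b _ => by simp only [transpose_apply]; ring
    _ = _ := by
        rw [← ((hT.commute_adj_transpose hV).pow_left 2).eq, hT.adj_sq_mul_transpose_apply hV hji,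
          hT.adj_sq_apply hV, adj_of_arc hji, adj_of_arc_symm hji]
        ring

omit [DecidableEq V] in
lemma sum_four_walks_mul_back_chord {i j : V} (hji : T.r j i) :
    ∑ a, ∑ b, ∑ c, T.adj i a * T.adj a b * T.adj b c * T.adj c j * T.adj c a =
      t * (t + 1) * (2 * t + 1) := by
  classical
  calc _ = ∑ a, T.adj i a * ∑ c, (T.adj c a * (T.adj ^ 2) a c) * T.adj c j := by
        refine sum_congr rfl fun a _ => ?_
        rw [sum_comm]
        simp only [pow_two, mul_apply, mul_sum, sum_mul]
        exact sum_congr rfl fun c _ => sum_congr rfl fun b _ => by ring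
    _ = (t + 1) * (T.adj * (T.adjᵀ * T.adj)) i j := by
        simp only [hT.adj_swap_mul_adj_sq_apply hV, mul_apply, transpose_apply, mul_sum,
          mul_left_comm _ (t + 1 : ℤ), mul_assoc]
    _ = _ := by
        rw [← (hT.commute_adj_transpose hV).eq, ← mul_assoc, ← pow_two,
          hT.adj_sq_mul_transpose_apply hV hji]
        ring

lemma sum_loopsMeeting_triangle {i j : V} (hji : T.r j i) :
    ∑ o ∈ walks T.r 2 i j, loopsMeeting T.r 4 o = 6 * t ^ 3 * (t + 1) * (4 * t + 3) := by
  have hconst : ∀ o ∈ walks T.r 2 i j, loopsMeeting T.r 4 o = 6 * t ^ 3 * (4 * t + 3) := by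
    intro o ho
    simp only [mem_walks_succ, mem_walks_zero] at ho
    obtain ⟨a, hia, _, ⟨b, haj, _, ⟨rfl, rfl⟩, rfl⟩, rfl⟩ := ho
    exact hT.loopsMeeting_triangle hV hia haj hji
  rw [sum_congr rfl hconst, sum_const, nsmul_eq_mul, card_walks, hT.adj_sq_apply hV,
    adj_of_arc hji, adj_of_arc_symm hji]
  ring

lemma sum_loopsMeeting_quadrilateral {i j : V} (hji : T.r j i) :
    ∑ o ∈ walks T.r 3 i j, loopsMeeting T.r 3 o =
      2 * t * (t + 1) * (16 * t ^ 3 + 6 * t ^ 2 - 2 * t + 1) := by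
  have hconst : ∀ o ∈ walks T.r 3 i j,
      loopsMeeting T.r 3 o = 16 * t ^ 3 + 6 * t ^ 2 - 2 * t + 1 := by
    intro o ho
    simp only [mem_walks_succ, mem_walks_zero] at ho
    obtain ⟨a, hia, _, ⟨b, hab, _, ⟨c, hbj, _, ⟨rfl, rfl⟩, rfl⟩, rfl⟩, rfl⟩ := ho
    exact hT.loopsMeeting_quadrilateral hV hia hab hbj hji
  rw [sum_congr rfl hconst, sum_const, nsmul_eq_mul, card_walks, hT.adj_pow_three hV]
  simp only [Matrix.add_apply, Matrix.smul_apply, transpose_apply, T.one_apply_of_arc_symm hji,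
    adj_of_arc hji, adj_of_arc_symm hji, smul_eq_mul]
  ring

lemma walk_weight_mul_loopsMeeting_pentagon {i j : V} (hji : T.r j i) (a b c : V) :
    T.adj i a * T.adj a b * T.adj b c * T.adj c j * loopsMeeting T.r 2 [i, a, b, c, j] =
    T.adj i a * T.adj a b * T.adj b c * T.adj c j * (5 * (t + 1) * (2 * t - 1)) +
    T.adj i a * T.adj a b * T.adj b c * T.adj c j *
      (T.adj a j + T.adj j a * (T.adj b j + T.adj a c)) +
    T.adj i a * T.adj a b * T.adj b c * T.adj c j *
      (T.adj i c + T.adj c i * (T.adj a c + T.adj i b)) +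
    T.adj i a * T.adj a b * T.adj b c * T.adj c j *
      (T.adj b i + T.adj j b + T.adj i b * T.adj b j) +
    T.adj i a * T.adj a b * T.adj b c * T.adj c j * T.adj c a := by
  by_cases h : T.r i a ∧ T.r a b ∧ T.r b c ∧ T.r c j
  · obtain ⟨hia, hab, hbc, hcj⟩ := h
    rw [hT.loopsMeeting_pentagon hV hia hab hbc hcj hji]
    ring
  · have hzero : T.adj i a * T.adj a b * T.adj b c * T.adj c j = 0 := by
      simp only [not_and_or] at h
      rcases h with h | h | h | h <;> simp [adj_of_not_arc h]
    simp only [hzero, zero_mul, add_zero]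

lemma sum_loopsMeeting_pentagon {i j : V} (hji : T.r j i) :
    ∑ o ∈ walks T.r 4 i j, loopsMeeting T.r 2 o = 10 * t ^ 3 * (t + 1) * (4 * t + 3) := by
  have hwalks : ∑ a, ∑ b, ∑ c, T.adj i a * T.adj a b * T.adj b c * T.adj c j =
      t * (t + 1) * (4 * t + 1) := by
    calc _ = (T.adj ^ 4) i j := by
          simp only [pow_succ' _ 3, pow_succ' _ 2, pow_two, mul_apply, mul_sum, mul_assoc]
      _ = _ := by
          simp only [hT.adj_pow_four hV, Matrix.add_apply, Matrix.smul_apply, transpose_apply,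
            T.one_apply_of_arc_symm hji, adj_of_arc hji, adj_of_arc_symm hji, smul_eq_mul]
          ring
  calc _ = ∑ a, ∑ b, ∑ c, T.adj i a * T.adj a b * T.adj b c * T.adj c j *
        loopsMeeting T.r 2 [i, a, b, c, j] := by
        simp only [sum_walks_succ 3, sum_walks_succ 2, sum_walks_succ 1, sum_walks_one, mul_sum,
          mul_assoc]
    _ = t * (t + 1) * (4 * t + 1) * (5 * (t + 1) * (2 * t - 1)) + t * (t + 1) * (4 * t + 1) +
        t * (t + 1) * (4 * t + 1) + t * (t + 1) * (5 * t + 2) + t * (t + 1) * (2 * t + 1) := by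
        simp only [hT.walk_weight_mul_loopsMeeting_pentagon hV hji, sum_add_distrib,
          hT.sum_four_walks_mul_last_chords hV hji, hT.sum_four_walks_mul_first_chords hV hji,
          hT.sum_four_walks_mul_middle_chords hV hji, hT.sum_four_walks_mul_back_chord hV hji]
        simp only [← sum_mul, hwalks]
    _ = _ := by ring

end IsDoublyRegular

/-! ### Walks that are not paths -/

variable [DecidableEq V]

lemma two_le_of_mem_walks_self {n : ℕ} {x : V} {c : List V} (hc : c ∈ walks T.r (n + 1) x x) :
    2 ≤ n := by
  by_contra! hn
  interval_cases n
  · simp only [mem_walks_succ, mem_walks_zero] at hc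
    obtain ⟨y, hxy, -, ⟨rfl, -⟩, -⟩ := hc
    exact T.irrefl y hxy
  · simp only [mem_walks_succ, mem_walks_zero] at hc
    obtain ⟨y, hxy, -, ⟨z, hyz, -, ⟨rfl, -⟩, -⟩, -⟩ := hc
    exact T.asymm hxy hyz

lemma nodup_tail_of_mem_walks_self {n : ℕ} {x : V} {c : List V} (hc : c ∈ walks T.r n x x)
    (hn : n < 6) : c.tail.Nodup := by
  obtain ⟨l, rfl⟩ := exists_cons_of_mem_walks hc
  rw [List.tail_cons]
  by_contra hl
  obtain ⟨p, z, q, s, rfl, -⟩ := exists_splice_of_not_nodup hl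
  obtain rfl : n = (x :: p).length + s.length + (q.length + 1) := by
    have := length_of_mem_walks hc
    simp only [List.length_cons, List.length_append] at this ⊢
    omega
  obtain ⟨houter, hloop⟩ := splice_mem_walks_iff.mp hc
  rw [List.length_cons, Nat.add_right_comm] at houter
  have := two_le_of_mem_walks_self houter
  have := two_le_of_mem_walks_self hloop
  rw [List.length_cons] at hn
  omega

lemma two_le_of_mem_walks {m : ℕ} {i j : V} {o : List V} (hji : T.r j i)
    (ho : o ∈ walks T.r m i j) : 2 ≤ m :=
  two_le_of_mem_walks_self (mem_walks_succ.mpr ⟨i, hji, o, ho, rfl⟩)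

lemma nodup_of_mem_walks {m : ℕ} {i j : V} {o : List V} (hji : T.r j i)
    (ho : o ∈ walks T.r m i j) (hm : m < 5) : o.Nodup :=
  nodup_tail_of_mem_walks_self (mem_walks_succ.mpr ⟨i, hji, o, ho, rfl⟩) (by omega)

lemma sum_card_loops_eq_loopsMeeting {m n : ℕ} {x y : V} {o : List V} (ho : o ∈ walks T.r m x y)
    (hnodup : o.Nodup) (hn : n < 5) :
    (∑ k ∈ range (m + 1), #{c ∈ walks T.r (n + 1) (o.getD k x) (o.getD k x) |
      (o.take k ++ c.tail).Nodup} : ℤ) = loopsMeeting T.r n o := by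
  rw [← length_of_mem_walks ho, sum_range, loopsMeeting]
  refine sum_congr rfl fun k _ => ?_
  have hk : o[k] ∉ o.take k := by
    intro h
    obtain ⟨l, hl, hlk⟩ := List.mem_take_iff_getElem.mp h
    have := hnodup.getElem_inj_iff.mp hlk
    omega
  rw [List.getD_eq_getElem _ _ k.isLt, ← Fin.getElem_fin, ← avoidingMatrix_pow_succ_apply hk,
    ← card_walks_avoiding]
  congr! 3 with c hc
  rw [List.nodup_append_comm, List.nodup_append']
  simp [nodup_tail_of_mem_walks_self hc (by omega), hnodup.sublist (List.take_sublist _ _),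
    List.Disjoint]

lemma card_walks_not_nodup_of_arc {n : ℕ} (hn : n ≤ 7) {i j : V} (hji : T.r j i) :
    (#{l ∈ walks T.r n i j | ¬ l.Nodup} : ℤ) =
      ∑ m ∈ Ico 2 (n - 2), ∑ o ∈ walks T.r m i j, loopsMeeting T.r (n - m - 1) o := by
  rw [card_walks_not_nodup]
  push_cast
  refine (sum_subset_zero_on_sdiff ?_ ?_ ?_).symm
  · intro m hm
    rw [mem_Ico] at hm
    rw [mem_range]
    omega
  · intro m hm
    rw [mem_sdiff, mem_range, mem_Ico] at hm
    refine sum_eq_zero fun o ho => sum_eq_zero fun k _ => ?_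
    rw [Nat.cast_eq_zero, card_eq_zero, filter_eq_empty_iff]
    intro c hc
    obtain ⟨d, hd⟩ : ∃ d, n - m = d + 1 := ⟨n - m - 1, by omega⟩
    rw [hd] at hc
    have := two_le_of_mem_walks_self hc
    have := two_le_of_mem_walks hji ho
    omega
  · intro m hm
    rw [mem_Ico] at hm
    refine sum_congr rfl fun o ho => ?_
    rw [← sum_card_loops_eq_loopsMeeting ho (nodup_of_mem_walks hji ho (by omega)) (by omega)]
    rw [Nat.sub_add_cancel (by omega)]

end Finite

end Tournament

theorem non_path_seven_walks_of_doubly_regular_general {V : Type*} [Fintype V] (t : ℕ)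
    (T : Tournament V) (hDR : T.IsDoublyRegular t) (hV : Fintype.card V = 4 * t + 3) (i j : V)
    (harc : T.r j i) :
    (Nat.card {v : Fin 8 → V //
        v 0 = i ∧ v 7 = j ∧ (∀ k : Fin 7, T.r (v k.castSucc) (v k.succ)) ∧
        ¬ Function.Injective v} : ℤ)
      = 2 * (t : ℤ) * ((t : ℤ) + 1) *
          (48 * (t : ℤ) ^ 3 + 30 * (t : ℤ) ^ 2 - 2 * (t : ℤ) + 1) := by
  classical
  have hlists := card_walkFunctions (r := T.r) (n := 7) (fun l => ¬ l.Nodup) i j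
  simp only [List.nodup_ofFn] at hlists
  calc _ = (#{l ∈ walks T.r 7 i j | ¬ l.Nodup} : ℤ) := congrArg _ hlists
    _ = ∑ m ∈ Ico 2 5, ∑ o ∈ walks T.r m i j, loopsMeeting T.r (6 - m) o :=
      Tournament.card_walks_not_nodup_of_arc le_rfl harc
    _ = 6 * t ^ 3 * (t + 1) * (4 * t + 3) +
        2 * t * (t + 1) * (16 * t ^ 3 + 6 * t ^ 2 - 2 * t + 1) +
        10 * t ^ 3 * (t + 1) * (4 * t + 3) := by
      rw [← hDR.sum_loopsMeeting_triangle hV harc, ← hDR.sum_loopsMeeting_quadrilateral hV harc,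
        ← hDR.sum_loopsMeeting_pentagon hV harc]
      simp only [sum_Ico_succ_top, Nat.reduceLeDiff, Ico_self, sum_empty, zero_add, Nat.reduceSub]
    _ = _ := by ring

theorem non_path_seven_walks_of_doubly_regular
    (t : ℕ) (T : Tournament (Fin (4 * t + 3)))
    (hDR : T.IsDoublyRegular t)
    (i j : Fin (4 * t + 3)) (harc : T.r j i) :
    -- walks of length 7 from `i` to `j` that are not paths
    (Nat.card {v : Fin 8 → Fin (4 * t + 3) //
        v 0 = i ∧ v 7 = j ∧ (∀ k : Fin 7, T.r (v k.castSucc) (v k.succ)) ∧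
        ¬ Function.Injective v} : ℤ)
      = 2 * (t : ℤ) * ((t : ℤ) + 1) *
          (48 * (t : ℤ) ^ 3 + 30 * (t : ℤ) ^ 2 - 2 * (t : ℤ) + 1) :=
  non_path_seven_walks_of_doubly_regular_general t T hDR (Fintype.card_fin _) i j harc
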